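/- For every N and every union A_N of families of N×N random matrices with essentially bounded entries, the linear spans 𝒞_N and ℱ_N are unital subalgebras of the algebra of N×N random matrices (they contain the identity matrix and are closed under matrix product), and Δ(ℱ_N) = 𝒞_N. -/

import Mathlib

open MeasureTheory ProbabilityTheory Filter Matrix Asymptotics
open scoped BigOperators ENNReal
open scoped Classical

noncomputable section

/-- The diagonal projection `Δ` on `N × N` complex matrices. -/
def dproj {N : ℕ} (A : Matrix (Fin N) (Fin N) ℂ) : Matrix (Fin N) (Fin N) ℂ :=
  Matrix.of fun i j => if i = j then A i j else 0

/-- The operator norm of a matrix acting on `ℓ²({1,…,N})`. -/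
def matOpNorm {N : ℕ} (A : Matrix (Fin N) (Fin N) ℂ) : ℝ :=
  ‖Matrix.toEuclideanCLM (𝕜 := ℂ) A‖

/-! ### Multigraph combinatorics -/

section Graph

variable {V E : Type} (src tgt : E → V)

/-- Adjacency through an edge avoiding a forbidden set `F` of edges
(direction is ignored). -/
def adjOn (F : Set E) (a b : V) : Prop :=
  ∃ e, e ∉ F ∧ ((src e = a ∧ tgt e = b) ∨ (src e = b ∧ tgt e = a))

/-- Reachability in the graph, using only edges outside `F`. -/
def reachOn (F : Set E) : V → V → Prop :=
  Relation.ReflTransGen (adjOn src tgt F)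

lemma adjOn_symm (F : Set E) : Symmetric (adjOn src tgt F) := by
  rintro a b ⟨e, he, h⟩
  exact ⟨e, he, h.symm⟩

/-- The setoid of connectivity using edges outside `F`. -/
def connSetoid (F : Set E) : Setoid V :=
  ⟨reachOn src tgt F,
    ⟨fun _ => Relation.ReflTransGen.refl,
     fun h => (@Relation.ReflTransGen.symmetric _ _ ⟨fun _ _ h => adjOn_symm src tgt F h⟩).symm _ _ h,
     fun h h' => Relation.ReflTransGen.trans h h'⟩⟩

/-- Number of connected components of the graph with the edges in `F` deleted. -/
def ncompAvoiding (F : Set E) : ℕ :=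
  Nat.card (Quotient (connSetoid src tgt F))

/-- Number of connected components. -/
def ncomp : ℕ := ncompAvoiding src tgt ∅

/-- The graph is connected. -/
def IsConnectedGraph : Prop := ∀ a b : V, reachOn src tgt ∅ a b

/-- A cut edge (bridge): deleting it disconnects its endpoints. -/
def IsCutEdge (e : E) : Prop := ¬ reachOn src tgt {e} (src e) (tgt e)

/-- The set of cut edges. -/
def cutEdges : Set E := {e | IsCutEdge src tgt e}

/-- The setoid whose classes are the two-edge connected components
(connected components after deleting all cut edges). -/
def teccSetoid : Setoid V := connSetoid src tgt (cutEdges src tgt)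

/-- Degree, in the forest of two-edge connected components, of a
two-edge connected component: the number of cut edges incident to it. -/
def teccDeg (c : Quotient (teccSetoid src tgt)) : ℕ :=
  Nat.card {e : E // IsCutEdge src tgt e ∧
    (Quotient.mk (teccSetoid src tgt) (src e) = c ∨
      Quotient.mk (teccSetoid src tgt) (tgt e) = c)}

/-- `𝔣(G)`: the number of leaves of the forest of two-edge connected components,
single-vertex trees of the forest counting twice. -/
def frak : ℕ :=
  Nat.card {c : Quotient (teccSetoid src tgt) // teccDeg src tgt c = 1} +
    2 * Nat.card {c : Quotient (teccSetoid src tgt) // teccDeg src tgt c = 0}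

end Graph

/-! ### Graph monomials -/

/-- A graph monomial: a finite directed multigraph with two roots and edges
labelled by a family index in `Fin L` and an index in `K`.  (Connectedness is
required separately via `IsConnectedGraph`.) -/
structure GraphMonomial (L : ℕ) (K : Type) where
  V : Type
  E : Type
  fintV : Fintype V
  fintE : Fintype E
  src : E → V
  tgt : E → V
  vin : V
  vout : V
  labL : E → Fin L
  labK : E → K

attribute [instance] GraphMonomial.fintV GraphMonomial.fintE

namespace GraphMonomial

variable {L : ℕ} {K : Type} (g : GraphMonomial L K)

/-- Evaluation of a graph monomial in a collection of matrices. -/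
def eval {N : ℕ} (A : Fin L → K → Matrix (Fin N) (Fin N) ℂ) :
    Matrix (Fin N) (Fin N) ℂ :=
  Matrix.of fun i j => ∑ φ : g.V → Fin N,
    if φ g.vin = j ∧ φ g.vout = i then
      ∏ e : g.E, A (g.labL e) (g.labK e) (φ (g.tgt e)) (φ (g.src e))
    else 0

/-- The starting vertex of a step `(e, b)`: `e` traversed forward if `b = true`,
backward otherwise. -/
def stepSrc (s : g.E × Bool) : g.V := if s.2 then g.src s.1 else g.tgt s.1

/-- The ending vertex of a step. -/
def stepTgt (s : g.E × Bool) : g.V := if s.2 then g.tgt s.1 else g.src s.1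

/-- A simple cycle of the underlying undirected multigraph: a nonempty cyclic
sequence of steps with pairwise distinct edges and pairwise distinct vertices. -/
def IsSimpleCycle (c : List (g.E × Bool)) : Prop :=
  ∃ h : c ≠ [],
    (∀ i : Fin c.length,
      g.stepTgt (c.get i) =
        g.stepSrc (c.get ⟨((i : ℕ) + 1) % c.length,
          Nat.mod_lt _ (List.length_pos_iff.mpr h)⟩)) ∧
    (c.map Prod.fst).Nodup ∧ (c.map g.stepSrc).Nodup

/-- A cycle is directed when it traverses all its edges consistently with
their orientations (one way or the other). -/
def IsDirectedCycleList (c : List (g.E × Bool)) : Prop :=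
  (∀ s ∈ c, s.2 = true) ∨ (∀ s ∈ c, s.2 = false)

/-- `S` is the edge set of some simple cycle. -/
def IsCycleEdgeSet (S : Finset g.E) : Prop :=
  ∃ c, g.IsSimpleCycle c ∧ (c.map Prod.fst).toFinset = S

/-- The underlying graph is an oriented cactus: it is connected, every simple
cycle is directed, and every edge belongs to exactly one simple cycle. -/
def IsOrientedCactus : Prop :=
  IsConnectedGraph g.src g.tgt ∧
  (∀ c, g.IsSimpleCycle c → g.IsDirectedCycleList c) ∧
  (∀ e : g.E, ∃! S : Finset g.E, g.IsCycleEdgeSet S ∧ e ∈ S)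

/-- A cactus-type monomial: an oriented cactus whose input and output coincide. -/
def IsCactusType : Prop := g.vin = g.vout ∧ g.IsOrientedCactus

/-- A member of `ℱ`: a directed simple path (oriented from the input, at the far
right, to the output, at the far left) with oriented cacti attached to the
vertices of the path (the root of each cactus being a path vertex). -/
def IsPathCactusType : Prop :=
  IsConnectedGraph g.src g.tgt ∧
  ∃ (d : ℕ) (v : Fin (d + 1) → g.V) (f : Fin d → g.E),
    Function.Injective v ∧ Function.Injective f ∧
    (∀ j : Fin d, g.src (f j) = v j.succ ∧ g.tgt (f j) = v j.castSucc) ∧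
    g.vin = v (Fin.last d) ∧ g.vout = v 0 ∧
    (∀ c, g.IsSimpleCycle c → g.IsDirectedCycleList c ∧ ∀ s ∈ c, s.1 ∉ Set.range f) ∧
    (∀ e : g.E, e ∉ Set.range f →
      ∃! S : Finset g.E, g.IsCycleEdgeSet S ∧ e ∈ S) ∧
    (∀ w : g.V, ∃! j : Fin (d + 1), reachOn g.src g.tgt (Set.range f) w (v j))

end GraphMonomial
/-! ### Random matrices, expectations, test graphs -/

/-- The entries of the random matrix `X` are measurable. -/
def EntriesMeasurable {N : ℕ} {Ω : Type} [MeasurableSpace Ω]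
    (X : Ω → Matrix (Fin N) (Fin N) ℂ) : Prop :=
  ∀ i j, Measurable fun ω => X ω i j

/-- The entries of the random matrix `X` are essentially bounded. -/
def EntriesBounded {N : ℕ} {Ω : Type} [MeasurableSpace Ω] (μ : Measure Ω)
    (X : Ω → Matrix (Fin N) (Fin N) ℂ) : Prop :=
  ∃ C : ℝ, ∀ᵐ ω ∂μ, ∀ i j, ‖X ω i j‖ ≤ C

/-- The σ-algebra generated by the entries of the matrices of a family. -/
def famSigma {N : ℕ} {Ω K : Type} [MeasurableSpace Ω]
    (A : K → Ω → Matrix (Fin N) (Fin N) ℂ) : MeasurableSpace Ω :=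
  ⨆ k : K, ⨆ i : Fin N, ⨆ j : Fin N,
    MeasurableSpace.comap (fun ω => A k ω i j) inferInstance

/-- Permutation invariance of a family of `N × N` random matrices. -/
def PermInvariant {N : ℕ} {Ω K : Type} [MeasurableSpace Ω] (μ : Measure Ω)
    (A : K → Ω → Matrix (Fin N) (Fin N) ℂ) : Prop :=
  ∀ σ : Equiv.Perm (Fin N),
    Measure.map (fun ω => fun (k : K) (i j : Fin N) => A k ω (σ i) (σ j)) μ =
      Measure.map (fun ω => fun (k : K) (i j : Fin N) => A k ω i j) μ

/-- A test graph with matrix-valued edge labels. -/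
structure TestGraph (N : ℕ) (Ω : Type) where
  V : Type
  E : Type
  fintV : Fintype V
  fintE : Fintype E
  src : E → V
  tgt : E → V
  lab : E → Ω → Matrix (Fin N) (Fin N) ℂ

attribute [instance] TestGraph.fintV TestGraph.fintE

namespace TestGraph

variable {N : ℕ} {Ω : Type} [MeasurableSpace Ω]

/-- Number of connected components `c(T)` of a test graph. -/
def ncc (T : TestGraph N Ω) : ℕ := ncomp T.src T.tgt

/-- The (unnormalized) trace observable of a test graph. -/
def tauInner (T : TestGraph N Ω) (ω : Ω) : ℂ :=
  ∑ φ : T.V → Fin N, ∏ e : T.E, T.lab e ω (φ (T.tgt e)) (φ (T.src e))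

/-- The (unnormalized) injective trace observable of a test graph. -/
def tau0Inner (T : TestGraph N Ω) (ω : Ω) : ℂ :=
  ∑ φ : T.V → Fin N,
    if Function.Injective φ then ∏ e : T.E, T.lab e ω (φ (T.tgt e)) (φ (T.src e)) else 0

/-- `τ_N[T]`. -/
def tau (T : TestGraph N Ω) (μ : Measure Ω) : ℂ :=
  ((N : ℂ) ^ T.ncc)⁻¹ * ∫ ω, T.tauInner ω ∂μ

/-- `τ⁰_N[T]`. -/
def tau0 (T : TestGraph N Ω) (μ : Measure Ω) : ℂ :=
  ((N : ℂ) ^ T.ncc)⁻¹ * ∫ ω, T.tau0Inner ω ∂μ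

/-- The quotient test graph `T^π` associated with a partition `π` of the
vertices of `T`. -/
def quot (T : TestGraph N Ω) (π : Setoid T.V) : TestGraph N Ω where
  V := Quotient π
  E := T.E
  fintV := @Quotient.fintype _ T.fintV π fun _ _ => Classical.propDecidable _
  fintE := T.fintE
  src := fun e => Quotient.mk π (T.src e)
  tgt := fun e => Quotient.mk π (T.tgt e)
  lab := T.lab

end TestGraph

/-- Monomial `D₀ X_{k(1)} D₁ ⋯ X_{k(d)} D_d` evaluated in a family of matrices:
the coefficients are given as an arbitrary function `D : ℕ → Matrix`. -/
def monomialEval {K : Type} {N : ℕ} (A : K → Matrix (Fin N) (Fin N) ℂ)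
    (dd : ℕ) (kk : ℕ → K) (D : ℕ → Matrix (Fin N) (Fin N) ℂ) :
    Matrix (Fin N) (Fin N) ℂ :=
  D 0 * (List.ofFn fun j : Fin dd => A (kk ((j : ℕ) + 1)) * D ((j : ℕ) + 1)).prod

/-- The centered product `(M₁ - ΔM₁)(M₂ - ΔM₂)⋯(Mₙ - ΔMₙ)`. -/
def centeredProd {N n : ℕ} (M : Fin n → Matrix (Fin N) (Fin N) ℂ) :
    Matrix (Fin N) (Fin N) ℂ :=
  (List.ofFn fun i : Fin n => M i - dproj (M i)).prod

/-- Mutual independence of the families `A 1, …, A L` of random matrices. -/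
def IndepFamilies {Ω K : Type} {L : ℕ} [MeasurableSpace Ω] (μ : Measure Ω)
    (A : (N : ℕ) → Fin L → K → Ω → Matrix (Fin N) (Fin N) ℂ) : Prop :=
  ∀ N : ℕ, ProbabilityTheory.iIndep (fun ℓ : Fin L => famSigma (A N ℓ)) μ

/-- Uniform boundedness, in operator norm, of families of random matrices. -/
def UnifOpNormBound {Ω K : Type} {L : ℕ} [MeasurableSpace Ω] (μ : Measure Ω)
    (A : (N : ℕ) → Fin L → K → Ω → Matrix (Fin N) (Fin N) ℂ) : Prop :=
  ∃ C : ℝ, ∀ (N : ℕ) (ℓ : Fin L) (k : K), ∀ᵐ ω ∂μ, matOpNorm (A N ℓ k ω) ≤ C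

/-- The growth bound (MS) for the family `A · ℓ`:
for all graph monomials `g₁, …, gₘ` labelled in the single family `ℓ` and having
equal input and output, `E[∏ᵢ Tr gᵢ(A_N)] = O(N^{Σᵢ 𝔣(gᵢ)/2})` as `N → ∞`. -/
def MSBound {Ω K : Type} {L : ℕ} [MeasurableSpace Ω] (μ : Measure Ω)
    (A : (N : ℕ) → Fin L → K → Ω → Matrix (Fin N) (Fin N) ℂ) (ℓ : Fin L) : Prop :=
  ∀ (m : ℕ), 1 ≤ m → ∀ gs : Fin m → GraphMonomial L K,
    (∀ i : Fin m, IsConnectedGraph (gs i).src (gs i).tgt ∧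
      (∀ e, (gs i).labL e = ℓ) ∧ (gs i).vin = (gs i).vout) →
    (fun N : ℕ => ∫ ω, ∏ i : Fin m,
        Matrix.trace ((gs i).eval fun ℓ' k => A N ℓ' k ω) ∂μ)
      =O[atTop] fun N : ℕ => (N : ℝ) ^ ((∑ i : Fin m, (frak (gs i).src (gs i).tgt : ℝ)) / 2)

/-!
Identifying the input of a graph monomial with the output of another one multiplies the
evaluations. A simple cycle of the glued graph stays on one side of the cut vertex, so cacti, and
paths with attached cacti, are stable under this operation.

Identifying the input of a single graph monomial with its output applies `Δ` to the evaluation.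
When the monomial is a path with attached cacti, the path closes up into one new directed cycle,
and no other cycle is created since every edge off the path stays over a single path vertex: the
result is an oriented cactus. Conversely `Δ` fixes the evaluation of any monomial whose two roots
coincide, and a cactus-type monomial is a path with attached cacti whose path has no edge.
-/

lemma exists_isRotated_cons_forall_ne {α β : Type*} {l : List α} (hl : l ≠ []) {F : α → β}
    (hF : (l.map F).Nodup) (y : β) : ∃ a t, (a :: t) ~r l ∧ ∀ b ∈ t, F b ≠ y := by
  by_cases hy : y ∈ l.map F
  · obtain ⟨a, ha, rfl⟩ := List.mem_map.1 hy
    obtain ⟨l₁, l₂, rfl⟩ := List.append_of_mem ha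
    have hrot : (a :: (l₂ ++ l₁)) ~r (l₁ ++ a :: l₂) := List.isRotated_append (l := a :: l₂)
    have hnd := ((hrot.perm.map F).nodup_iff).2 hF
    rw [List.map_cons, List.nodup_cons] at hnd
    exact ⟨a, l₂ ++ l₁, hrot, fun b hb hba => hnd.1 (hba ▸ List.mem_map_of_mem hb)⟩
  · obtain ⟨a, t, rfl⟩ := List.exists_cons_of_ne_nil hl
    exact ⟨a, t, .refl _, fun b hb hby => hy (hby ▸ List.mem_map_of_mem (.tail _ hb))⟩

lemma map_toFinset_of_isRotated {E E' : Type*} {_ : DecidableEq E} {_ : DecidableEq E'}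
    (j : E ↪ E') {c : List (E × Bool)} {c' : List (E' × Bool)}
    (hr : c.map (Prod.map j id) ~r c') :
    (c.map Prod.fst).toFinset.map j = (c'.map Prod.fst).toFinset := by
  ext e
  rw [List.mem_toFinset, ← (hr.perm.map Prod.fst).mem_iff]
  simp

lemma range_fin_append {α : Type*} {m n : ℕ} (u : Fin m → α) (v : Fin n → α) :
    Set.range (Fin.append u v) = Set.range u ∪ Set.range v := by
  rw [← finSumFinEquiv.surjective.range_comp (Fin.append u v), ← Set.Sum.elim_range]
  congr 1
  ext (i | i) <;> simp

lemma compl_image_inl_union_image_inr {α β : Type*} (s : Set α) (t : Set β) :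
    (Sum.inl '' s ∪ Sum.inr '' t)ᶜ = Sum.inl '' sᶜ ∪ Sum.inr '' tᶜ := by
  ext (x | x) <;> simp

lemma mul_mem_span {R M : Type*} [CommSemiring R] [Semiring M] [Algebra R M] {S : Set M}
    (hS : ∀ x ∈ S, ∀ y ∈ S, x * y ∈ S) {x y : M} (hx : x ∈ Submodule.span R S)
    (hy : y ∈ Submodule.span R S) : x * y ∈ Submodule.span R S :=
  Submodule.span_mono (Set.mul_subset_iff.2 hS)
    (Submodule.span_mul_span R S S ▸ Submodule.mul_mem_mul hx hy)

/-- The finite sets in `𝒮` partition `U`, in the form in which a cactus condition asks for it: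
every element of `U` belongs to exactly one of them. -/
def IsFinsetPartition {E : Type*} (𝒮 : Set (Finset E)) (U : Set E) : Prop :=
  (∀ S ∈ 𝒮, (S : Set E) ⊆ U) ∧ ∀ e ∈ U, ∃! S, S ∈ 𝒮 ∧ e ∈ S

namespace IsFinsetPartition

variable {E E' : Type*} {𝒮 𝒯 : Set (Finset E)} {U V : Set E}

lemma map (h𝒮 : IsFinsetPartition 𝒮 U) (j : E ↪ E') :
    IsFinsetPartition (Finset.map j '' 𝒮) (j '' U) := by
  refine ⟨?_, ?_⟩
  · rintro _ ⟨S, hS, rfl⟩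
    rw [Finset.coe_map]
    exact Set.image_mono (h𝒮.1 S hS)
  · rintro _ ⟨e, he, rfl⟩
    obtain ⟨S, ⟨hS, heS⟩, huniq⟩ := h𝒮.2 e he
    refine ⟨S.map j, ⟨⟨S, hS, rfl⟩, Finset.mem_map_of_mem j heS⟩, ?_⟩
    rintro _ ⟨⟨T, hT, rfl⟩, heT⟩
    rw [huniq T ⟨hT, (Finset.mem_map' j).1 heT⟩]

lemma union (h𝒮 : IsFinsetPartition 𝒮 U) (h𝒯 : IsFinsetPartition 𝒯 V) (hUV : Disjoint U V) :
    IsFinsetPartition (𝒮 ∪ 𝒯) (U ∪ V) := by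
  refine ⟨?_, ?_⟩
  · rintro S (hS | hS)
    exacts [(h𝒮.1 S hS).trans Set.subset_union_left, (h𝒯.1 S hS).trans Set.subset_union_right]
  · rintro e (he | he)
    · obtain ⟨S, ⟨hS, heS⟩, huniq⟩ := h𝒮.2 e he
      refine ⟨S, ⟨.inl hS, heS⟩, ?_⟩
      rintro T ⟨hT | hT, heT⟩
      exacts [huniq T ⟨hT, heT⟩, (hUV.notMem_of_mem_left he (h𝒯.1 T hT heT)).elim]
    · obtain ⟨S, ⟨hS, heS⟩, huniq⟩ := h𝒯.2 e he
      refine ⟨S, ⟨.inr hS, heS⟩, ?_⟩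
      rintro T ⟨hT | hT, heT⟩
      exacts [(hUV.notMem_of_mem_right he (h𝒮.1 T hT heT)).elim, huniq T ⟨hT, heT⟩]

lemma setOf_eq_and_nonempty (R : Finset E) :
    IsFinsetPartition {S | S = R ∧ S.Nonempty} (R : Set E) := by
  refine ⟨?_, fun e he => ⟨R, ⟨⟨rfl, e, he⟩, he⟩, fun S hS => hS.1.1⟩⟩
  rintro _ ⟨rfl, -⟩
  exact subset_rfl

end IsFinsetPartition

namespace GraphMonomial

variable {L : ℕ} {K : Type} {g h : GraphMonomial L K}

/-! ### Walks, paths and cycles -/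

/-- A walk from a vertex to another one, encoded by the list of its steps. -/
def IsWalk (g : GraphMonomial L K) : g.V → List (g.E × Bool) → g.V → Prop
  | a, [], b => a = b
  | a, s :: l, b => g.stepSrc s = a ∧ g.IsWalk (g.stepTgt s) l b

lemma isWalk_append {a b : g.V} {l₁ l₂ : List (g.E × Bool)} :
    g.IsWalk a (l₁ ++ l₂) b ↔ ∃ c, g.IsWalk a l₁ c ∧ g.IsWalk c l₂ b := by
  induction l₁ generalizing a with
  | nil => simp [IsWalk]
  | cons s l ih => simp [IsWalk, ih, and_assoc]

lemma isWalk_cons_iff_getElem {a b : g.V} {s : g.E × Bool} {l : List (g.E × Bool)} :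
    g.IsWalk a (s :: l) b ↔ g.stepSrc s = a ∧
      (∀ i (h : i + 1 < (s :: l).length),
        g.stepTgt ((s :: l)[i]) = g.stepSrc ((s :: l)[i + 1])) ∧
      g.stepTgt ((s :: l)[l.length]) = b := by
  induction l generalizing a s with
  | nil => simp [IsWalk]
  | cons t l ih =>
    rw [IsWalk, ih]
    constructor
    · rintro ⟨hs, ht, hl, hb⟩
      refine ⟨hs, ?_, by simpa using hb⟩
      rintro (_ | i) hi
      · simpa using ht.symm
      · exact hl i (by simpa using hi)
    · rintro ⟨hs, hl, hb⟩
      exact ⟨hs, by simpa using (hl 0 (by simp)).symm,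
        fun i hi => hl (i + 1) (by simpa using hi), by simpa using hb⟩

lemma isSimpleCycle_iff {c : List (g.E × Bool)} :
    g.IsSimpleCycle c ↔ c ≠ [] ∧ (∃ a, g.IsWalk a c a) ∧
      (c.map Prod.fst).Nodup ∧ (c.map g.stepSrc).Nodup := by
  unfold IsSimpleCycle
  cases c with
  | nil => simp
  | cons s l =>
    simp only [ne_eq, reduceCtorEq, not_false_eq_true, exists_true_left, true_and,
      isWalk_cons_iff_getElem, List.get_eq_getElem]
    refine and_congr_left fun _ => ⟨fun hnext => ?_, ?_⟩
    · refine ⟨g.stepSrc s, rfl, fun i hi => ?_, ?_⟩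
      · simpa only [Nat.mod_eq_of_lt hi] using hnext ⟨i, by omega⟩
      · simpa using hnext ⟨l.length, by simp⟩
    · rintro ⟨a, rfl, hnext, hlast⟩ ⟨i, hi⟩
      by_cases hi' : i + 1 < (s :: l).length
      · simpa only [Nat.mod_eq_of_lt hi'] using hnext i hi'
      · obtain rfl : i = l.length := by simp at hi hi'; omega
        simpa using hlast

lemma IsSimpleCycle.of_isRotated {c c' : List (g.E × Bool)} (hc : g.IsSimpleCycle c)
    (hr : c ~r c') : g.IsSimpleCycle c' := by
  obtain ⟨hne, ⟨a, hw⟩, hE, hV⟩ := isSimpleCycle_iff.1 hc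
  refine isSimpleCycle_iff.2 ⟨fun h' => hne ?_, ?_, ((hr.perm.map _).nodup_iff).1 hE,
    ((hr.perm.map _).nodup_iff).1 hV⟩
  · simpa [h'] using hr
  · obtain ⟨n, hn, rfl⟩ := List.isRotated_iff_mod.1 hr
    rw [← List.take_append_drop n c] at hw
    obtain ⟨b, htake, hdrop⟩ := isWalk_append.1 hw
    rw [List.rotate_eq_drop_append_take hn]
    exact ⟨b, isWalk_append.2 ⟨a, hdrop, htake⟩⟩

lemma IsDirectedCycleList.of_isRotated {c c' : List (g.E × Bool)}
    (hc : g.IsDirectedCycleList c) (hr : c ~r c') : g.IsDirectedCycleList c' :=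
  hc.imp (fun H s hs => H s (hr.mem_iff.2 hs)) (fun H s hs => H s (hr.mem_iff.2 hs))

lemma IsDirectedCycleList.map {c : List (g.E × Bool)} (j : g.E → h.E)
    (hc : g.IsDirectedCycleList c) : h.IsDirectedCycleList (c.map (Prod.map j id)) := by
  simpa [IsDirectedCycleList] using hc

/-- The family of edge sets of simple cycles. -/
def cycleEdgeSets (g : GraphMonomial L K) : Set (Finset g.E) := {S | g.IsCycleEdgeSet S}

lemma nonempty_of_mem_cycleEdgeSets {S : Finset g.E} (hS : S ∈ g.cycleEdgeSets) :
    S.Nonempty := by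
  obtain ⟨c, hc, rfl⟩ := hS
  obtain ⟨s, hs⟩ := List.exists_mem_of_ne_nil c hc.1
  exact ⟨s.1, List.mem_toFinset.2 (List.mem_map_of_mem hs)⟩

/-- Every simple cycle is directed. -/
def CyclesDirected (g : GraphMonomial L K) : Prop :=
  ∀ c, g.IsSimpleCycle c → g.IsDirectedCycleList c

/-- A walk from `a` to `b` with pairwise distinct edges and pairwise distinct vertices, including
the last vertex `b`. In particular a simple path from `a` to `a` has no step. -/
structure IsSimplePath (g : GraphMonomial L K) (a : g.V) (l : List (g.E × Bool)) (b : g.V) :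
    Prop where
  isWalk : g.IsWalk a l b
  nodup_edges : (l.map Prod.fst).Nodup
  nodup_vertices : (l.map g.stepSrc ++ [b]).Nodup

lemma isSimplePath_nil {a b : g.V} : g.IsSimplePath a [] b ↔ a = b :=
  ⟨fun hl => hl.isWalk, fun hab => ⟨hab, by simp, by simp⟩⟩

lemma isSimplePath_cons {a b : g.V} {s : g.E × Bool} {l : List (g.E × Bool)} :
    g.IsSimplePath a (s :: l) b ↔ g.stepSrc s = a ∧ s.1 ∉ l.map Prod.fst ∧
      a ∉ l.map g.stepSrc ++ [b] ∧ g.IsSimplePath (g.stepTgt s) l b := by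
  constructor
  · rintro ⟨⟨rfl, hw⟩, hE, hV⟩
    rw [List.map_cons, List.nodup_cons] at hE
    rw [List.map_cons, List.cons_append, List.nodup_cons] at hV
    exact ⟨rfl, hE.1, hV.1, hw, hE.2, hV.2⟩
  · rintro ⟨rfl, hE, hV, hl⟩
    exact ⟨⟨rfl, hl.isWalk⟩, List.nodup_cons.2 ⟨hE, hl.nodup_edges⟩,
      List.nodup_cons.2 ⟨hV, hl.nodup_vertices⟩⟩

lemma IsSimplePath.eq_nil {a : g.V} {l : List (g.E × Bool)} (hl : g.IsSimplePath a l a) :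
    l = [] := by
  cases l with
  | nil => rfl
  | cons s l => exact ((isSimplePath_cons.1 hl).2.2.1 (by simp)).elim

/-- The steps of a walk, traversed backwards. -/
def revSteps {E : Type*} (l : List (E × Bool)) : List (E × Bool) :=
  (l.map (Prod.map id not)).reverse

lemma stepSrc_map_not (s : g.E × Bool) : g.stepSrc (Prod.map id not s) = g.stepTgt s := by
  obtain ⟨e, _ | _⟩ := s <;> simp [stepSrc, stepTgt]

lemma stepTgt_map_not (s : g.E × Bool) : g.stepTgt (Prod.map id not s) = g.stepSrc s := by
  obtain ⟨e, _ | _⟩ := s <;> simp [stepSrc, stepTgt]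

lemma map_fst_revSteps {E : Type*} (l : List (E × Bool)) :
    (revSteps l).map Prod.fst = (l.map Prod.fst).reverse := by
  simp [revSteps, Function.comp_def]

lemma map_stepSrc_revSteps (l : List (g.E × Bool)) :
    (revSteps l).map g.stepSrc = (l.map g.stepTgt).reverse := by
  simp [revSteps, Function.comp_def, stepSrc_map_not]

lemma revSteps_revSteps {E : Type*} (l : List (E × Bool)) : revSteps (revSteps l) = l := by
  have hinv : Function.Involutive (Prod.map id not : E × Bool → E × Bool) := by
    rintro ⟨e, _ | _⟩ <;> rfl
  simp [revSteps, hinv.comp_self]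

lemma IsWalk.revSteps {a b : g.V} {l : List (g.E × Bool)} (hl : g.IsWalk a l b) :
    g.IsWalk b (revSteps l) a := by
  induction l generalizing a with
  | nil => exact hl.symm
  | cons s l ih =>
    obtain ⟨rfl, hl⟩ := hl
    simp only [GraphMonomial.revSteps, List.map_cons, List.reverse_cons]
    exact isWalk_append.2 ⟨_, ih hl, stepSrc_map_not s, stepTgt_map_not s⟩

lemma IsWalk.map_stepSrc_append {a b : g.V} {l : List (g.E × Bool)} (hl : g.IsWalk a l b) :
    l.map g.stepSrc ++ [b] = a :: l.map g.stepTgt := by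
  induction l generalizing a with
  | nil => simpa [IsWalk, eq_comm] using hl
  | cons s l ih =>
    obtain ⟨rfl, hl⟩ := hl
    simp [ih hl]

lemma IsSimplePath.revSteps {a b : g.V} {l : List (g.E × Bool)} (hl : g.IsSimplePath a l b) :
    g.IsSimplePath b (revSteps l) a where
  isWalk := hl.isWalk.revSteps
  nodup_edges := by
    rw [map_fst_revSteps, List.nodup_reverse]
    exact hl.nodup_edges
  nodup_vertices := by
    rw [map_stepSrc_revSteps, ← List.reverse_cons, List.nodup_reverse,
      ← hl.isWalk.map_stepSrc_append]
    exact hl.nodup_vertices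

/-! ### Homomorphisms -/

/-- The maps `i` on vertices and `j` on edges form a homomorphism of directed graphs; the roots
and the labels need not be preserved. -/
structure IsHom (g h : GraphMonomial L K) (i : g.V → h.V) (j : g.E → h.E) : Prop where
  src : ∀ e, h.src (j e) = i (g.src e)
  tgt : ∀ e, h.tgt (j e) = i (g.tgt e)

namespace IsHom

variable {i : g.V → h.V} {j : g.E → h.E}

lemma stepSrc (hij : IsHom g h i j) (s : g.E × Bool) :
    h.stepSrc (Prod.map j id s) = i (g.stepSrc s) := by
  obtain ⟨e, _ | _⟩ := s <;> simp [GraphMonomial.stepSrc, hij.src, hij.tgt]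

lemma stepTgt (hij : IsHom g h i j) (s : g.E × Bool) :
    h.stepTgt (Prod.map j id s) = i (g.stepTgt s) := by
  obtain ⟨e, _ | _⟩ := s <;> simp [GraphMonomial.stepTgt, hij.src, hij.tgt]

lemma map_stepSrc (hij : IsHom g h i j) (l : List (g.E × Bool)) :
    (l.map (Prod.map j id)).map h.stepSrc = (l.map g.stepSrc).map i := by
  simp [hij.stepSrc]

lemma isWalk (hij : IsHom g h i j) {a b : g.V} {l : List (g.E × Bool)} (hl : g.IsWalk a l b) :
    h.IsWalk (i a) (l.map (Prod.map j id)) (i b) := by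
  induction l generalizing a with
  | nil => exact congrArg i hl
  | cons s l ih =>
    obtain ⟨rfl, hl⟩ := hl
    exact ⟨hij.stepSrc s, (hij.stepTgt s).symm ▸ ih hl⟩

lemma isSimpleCycle_of_isWalk (hij : IsHom g h i j) (hj : Function.Injective j) {a b : g.V}
    {l : List (g.E × Bool)} (hl : g.IsWalk a l b) (hne : l ≠ []) (hab : i a = i b)
    (hE : (l.map Prod.fst).Nodup) (hV : ((l.map g.stepSrc).map i).Nodup) :
    h.IsSimpleCycle (l.map (Prod.map j id)) := by
  refine isSimpleCycle_iff.2 ⟨by simpa, ⟨i a, ?_⟩, ?_, (hij.map_stepSrc l).symm ▸ hV⟩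
  · conv in (occs := 2) i a => rw [hab]
    exact hij.isWalk hl
  · simpa [List.map_map, Function.comp_def] using hE.map hj

lemma isSimpleCycle (hij : IsHom g h i j) (hj : Function.Injective j) {c : List (g.E × Bool)}
    (hc : g.IsSimpleCycle c) (hi : Set.InjOn i {x | x ∈ c.map g.stepSrc}) :
    h.IsSimpleCycle (c.map (Prod.map j id)) := by
  obtain ⟨hne, ⟨a, hw⟩, hE, hV⟩ := isSimpleCycle_iff.1 hc
  exact hij.isSimpleCycle_of_isWalk hj hw hne rfl hE (hV.map_on fun x hx y hy => hi hx hy)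

lemma reachOn (hij : IsHom g h i j) {F : Set g.E} {F' : Set h.E} (hF : ∀ e ∉ F, j e ∉ F')
    {a b : g.V} (hab : reachOn g.src g.tgt F a b) : reachOn h.src h.tgt F' (i a) (i b) := by
  refine hab.lift i ?_
  rintro x y ⟨e, he, hxy⟩
  exact ⟨j e, hF e he, by rw [hij.src, hij.tgt]; grind⟩

end IsHom

/-- The injective homomorphism `(i, j)` identifies `g` with a union of connected components
of `h`. -/
structure IsSummand (g h : GraphMonomial L K) (i : g.V → h.V) (j : g.E → h.E) : Prop
    extends IsHom g h i j where
  injective_vert : Function.Injective i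
  injective_edge : Function.Injective j
  mem_range_edge : ∀ e, h.src e ∈ Set.range i ∨ h.tgt e ∈ Set.range i → e ∈ Set.range j

namespace IsSummand

variable {i : g.V → h.V} {j : g.E → h.E}

lemma exists_isWalk (hij : IsSummand g h i j) {a : g.V} {y : h.V} {l : List (h.E × Bool)}
    (hl : h.IsWalk (i a) l y) :
    ∃ (b : g.V) (l' : List (g.E × Bool)), g.IsWalk a l' b ∧ i b = y ∧
      l'.map (Prod.map j id) = l := by
  induction l generalizing a with
  | nil => exact ⟨a, [], rfl, hl, rfl⟩
  | cons s l ih =>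
    obtain ⟨hs, hl⟩ := hl
    obtain ⟨e, he⟩ : s.1 ∈ Set.range j := hij.mem_range_edge s.1 <| by
      rw [GraphMonomial.stepSrc] at hs
      split_ifs at hs
      exacts [.inl ⟨a, hs.symm⟩, .inr ⟨a, hs.symm⟩]
    obtain ⟨t, rfl⟩ : ∃ t, Prod.map j id t = s := ⟨(e, s.2), Prod.ext he rfl⟩
    rw [hij.stepTgt] at hl
    obtain ⟨b, l', hl', rfl, rfl⟩ := ih hl
    exact ⟨b, t :: l', ⟨hij.injective_vert ((hij.stepSrc _).symm.trans hs), hl'⟩, rfl, rfl⟩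

lemma exists_isSimpleCycle (hij : IsSummand g h i j) {a : g.V} {c : List (h.E × Bool)}
    (hc : h.IsSimpleCycle c) (ha : h.IsWalk (i a) c (i a)) :
    ∃ c', g.IsSimpleCycle c' ∧ c'.map (Prod.map j id) = c := by
  obtain ⟨b, l, hl, hb, rfl⟩ := hij.exists_isWalk ha
  obtain rfl := hij.injective_vert hb
  obtain ⟨hne, -, hE, hV⟩ := isSimpleCycle_iff.1 hc
  refine ⟨l, isSimpleCycle_iff.2 ⟨by simpa using hne, ⟨b, hl⟩, ?_, ?_⟩, rfl⟩
  · refine List.Nodup.of_map j ?_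
    simpa [Function.comp_def] using hE
  · exact (hij.map_stepSrc l ▸ hV).of_map

end IsSummand

/-! ### Identifying two vertices -/

/-- The graph monomial obtained from `g` by identifying the vertices `a` and `b`. -/
def collapse (g : GraphMonomial L K) (a b : g.V) : GraphMonomial L K where
  V := Quot fun x y => x = a ∧ y = b
  E := g.E
  fintV := Fintype.ofFinite _
  fintE := g.fintE
  src e := Quot.mk _ (g.src e)
  tgt e := Quot.mk _ (g.tgt e)
  vin := Quot.mk _ g.vin
  vout := Quot.mk _ g.vout
  labL := g.labL
  labK := g.labK

/-- The quotient map from `g` to `g.collapse a b` on vertices. -/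
def proj (g : GraphMonomial L K) (a b : g.V) : g.V → (g.collapse a b).V := Quot.mk _

section Collapse

variable {a b : g.V}

lemma proj_surjective : Function.Surjective (g.proj a b) := Quot.mk_surjective

lemma proj_left_eq_right : g.proj a b a = g.proj a b b := Quot.sound ⟨rfl, rfl⟩

lemma proj_eq_iff {x y : g.V} :
    g.proj a b x = g.proj a b y ↔ x = y ∨ ((x = a ∨ x = b) ∧ (y = a ∨ y = b)) := by
  constructor
  · intro hxy
    have hlift := congrArg (Quot.lift (fun z => if z = b then a else z)
      (by rintro _ _ ⟨rfl, rfl⟩; simp)) hxy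
    simp only [proj] at hlift
    split_ifs at hlift <;> grind
  · have hab := proj_left_eq_right (g := g) (a := a) (b := b)
    rintro (rfl | ⟨rfl | rfl, rfl | rfl⟩) <;> simp [hab]

lemma proj_injOn {s : Set g.V} (hs : a ∈ s → b ∈ s → a = b) : s.InjOn (g.proj a b) := by
  intro x hx y hy hxy
  obtain rfl | ⟨rfl | rfl, rfl | rfl⟩ := proj_eq_iff.1 hxy
  exacts [rfl, rfl, hs hx hy, (hs hy hx).symm, rfl]

lemma isHom_proj : IsHom g (g.collapse a b) (g.proj a b) id := ⟨fun _ => rfl, fun _ => rfl⟩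

lemma collapse_stepSrc (s : g.E × Bool) :
    (g.collapse a b).stepSrc s = g.proj a b (g.stepSrc s) := isHom_proj.stepSrc s

lemma collapse_stepTgt (s : g.E × Bool) :
    (g.collapse a b).stepTgt s = g.proj a b (g.stepTgt s) := isHom_proj.stepTgt s

lemma map_collapse_stepSrc (l : List (g.E × Bool)) :
    l.map (g.collapse a b).stepSrc = (l.map g.stepSrc).map (g.proj a b) := by
  rw [List.map_map]
  exact List.map_congr_left fun s _ => collapse_stepSrc (g := g) s

lemma exists_isWalk_of_collapse {x : g.V} {q : (g.collapse a b).V} {l : List (g.E × Bool)}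
    (hl : (g.collapse a b).IsWalk (g.proj a b x) l q)
    (hne : ∀ s ∈ l, (g.collapse a b).stepSrc s ≠ g.proj a b a) :
    ∃ y, g.IsWalk x l y ∧ g.proj a b y = q := by
  induction l generalizing x with
  | nil => exact ⟨x, rfl, hl⟩
  | cons s l ih =>
    obtain ⟨hs, hl⟩ := hl
    rw [collapse_stepTgt] at hl
    rw [List.forall_mem_cons] at hne
    obtain ⟨y, hy, rfl⟩ := ih hl hne.2
    rw [collapse_stepSrc] at hs hne
    exact ⟨y, ⟨by grind [proj_eq_iff], hy⟩, rfl⟩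

/-- The rotation lets the cycle start at the identified vertex, if it visits that vertex at all,
so that it lifts to a walk. -/
lemma exists_isRotated_of_collapse {c : List (g.E × Bool)}
    (hc : (g.collapse a b).IsSimpleCycle c) : ∃ c', c' ~r c ∧
      (g.IsSimpleCycle c' ∨ g.IsSimplePath a c' b ∨ g.IsSimplePath b c' a) := by
  obtain ⟨s, l, hr, hne⟩ := exists_isRotated_cons_forall_ne hc.1 hc.2.2.2 (g.proj a b a)
  obtain ⟨-, ⟨q, hq, hl⟩, hE, hV⟩ := isSimpleCycle_iff.1 (hc.of_isRotated hr.symm)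
  rw [collapse_stepTgt] at hl
  obtain ⟨y, hl, hy⟩ := exists_isWalk_of_collapse hl hne
  rw [map_collapse_stepSrc] at hV
  have hw : g.IsWalk (g.stepSrc s) (s :: l) y := ⟨rfl, hl⟩
  refine ⟨s :: l, hr, ?_⟩
  obtain hsy | hsy := eq_or_ne (g.stepSrc s) y
  · exact .inl (isSimpleCycle_iff.2 ⟨by simp, ⟨y, hsy ▸ hw⟩, hE, hV.of_map⟩)
  have hproj : g.proj a b (g.stepSrc s) = g.proj a b y := by rw [hy, ← hq, collapse_stepSrc]
  have hpath : g.IsSimplePath (g.stepSrc s) (s :: l) y := by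
    refine ⟨hw, hE, List.nodup_append_comm.1 (List.nodup_cons.2 ⟨fun hmem => ?_, hV.of_map⟩)⟩
    rw [List.map_cons, List.map_cons, List.nodup_cons, hproj] at hV
    obtain heq | hmem := List.mem_cons.1 hmem
    exacts [hsy heq.symm, hV.1 (List.mem_map_of_mem hmem)]
  obtain heq | ⟨hs | hs, hy' | hy'⟩ := proj_eq_iff.1 hproj
  exacts [absurd heq hsy, absurd (hs.trans hy'.symm) hsy, .inr (.inl (hs ▸ hy' ▸ hpath)),
    .inr (.inr (hs ▸ hy' ▸ hpath)), absurd (hs.trans hy'.symm) hsy]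

lemma IsSimplePath.isSimpleCycle_collapse {l : List (g.E × Bool)} (hl : g.IsSimplePath a l b)
    (hne : l ≠ []) : (g.collapse a b).IsSimpleCycle l := by
  have hV := List.nodup_append.1 hl.nodup_vertices
  have hinj : Set.InjOn (g.proj a b) {x | x ∈ l.map g.stepSrc} :=
    proj_injOn fun _ hb => (hV.2.2 b hb b (List.mem_singleton_self b) rfl).elim
  rw [← List.map_id l]
  exact isHom_proj.isSimpleCycle_of_isWalk Function.injective_id hl.isWalk hne
    proj_left_eq_right hl.nodup_edges (hV.1.map_on fun x hx y hy => hinj hx hy)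

lemma IsSimpleCycle.collapse {c : List (g.E × Bool)} (hc : g.IsSimpleCycle c)
    (hab : a ∈ c.map g.stepSrc → b ∈ c.map g.stepSrc → a = b) :
    (g.collapse a b).IsSimpleCycle c := by
  rw [← List.map_id c]
  exact isHom_proj.isSimpleCycle Function.injective_id hc (proj_injOn hab)

lemma isConnectedGraph_collapse (hg : IsConnectedGraph g.src g.tgt) :
    IsConnectedGraph (g.collapse a b).src (g.collapse a b).tgt := by
  refine proj_surjective.forall₂.2 fun x y => ?_
  exact isHom_proj.reachOn (fun _ he => he) (hg x y)

end Collapse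

/-! ### Spines -/

/-- A directed path `vert 0 ← vert 1 ← ⋯ ← vert length` from the input to the output, along which
the edges of the path cut `g` into one piece for each vertex of the path: the piece of `x` is the
one that contains `vert (foot x)`. The values `vert j` for `length < j` are irrelevant. -/
structure Spine (g : GraphMonomial L K) where
  length : ℕ
  vert : ℕ → g.V
  edge : Fin length → g.E
  foot : g.V → ℕ
  src_edge : ∀ i, g.src (edge i) = vert (i + 1)
  tgt_edge : ∀ i, g.tgt (edge i) = vert i
  vert_length : vert length = g.vin
  vert_zero : vert 0 = g.vout
  foot_vert : ∀ {j}, j ≤ length → foot (vert j) = j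
  foot_src_eq_foot_tgt : ∀ e ∉ Set.range edge, foot (g.src e) = foot (g.tgt e)
  foot_le : ∀ x, foot x ≤ length
  reachOn_foot : ∀ x, reachOn g.src g.tgt (Set.range edge) x (vert (foot x))

namespace Spine

/-- The spine of length zero of a connected graph monomial whose roots coincide. -/
def trivial (hg : IsConnectedGraph g.src g.tgt) (hroot : g.vin = g.vout) : g.Spine where
  length := 0
  vert _ := g.vin
  edge := Fin.elim0
  foot _ := 0
  src_edge i := i.elim0
  tgt_edge i := i.elim0
  vert_length := rfl
  vert_zero := hroot
  foot_vert hj := (Nat.le_zero.1 hj).symm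
  foot_src_eq_foot_tgt _ _ := rfl
  foot_le _ := le_rfl
  reachOn_foot x := Set.range_eq_empty (Fin.elim0 : Fin 0 → g.E) ▸ hg x g.vin

lemma exists_of_fin {d : ℕ} {v : Fin (d + 1) → g.V} {f : Fin d → g.E}
    (hf : ∀ j, g.src (f j) = v j.succ ∧ g.tgt (f j) = v j.castSucc)
    (hin : g.vin = v (Fin.last d)) (hout : g.vout = v 0)
    (hfoot : ∀ x, ∃! j, reachOn g.src g.tgt (Set.range f) x (v j)) :
    ∃ P : g.Spine, Set.range P.edge = Set.range f := by
  choose foot hreach huniq using hfoot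
  have hvert (j : Fin (d + 1)) : v ⟨min j d, by omega⟩ = v j :=
    congrArg v (Fin.ext (min_eq_left (by omega)))
  exact ⟨{
    length := d
    vert j := v ⟨min j d, by omega⟩
    edge := f
    foot x := foot x
    src_edge i := (hf i).1.trans (hvert i.succ).symm
    tgt_edge i := (hf i).2.trans (hvert i.castSucc).symm
    vert_length := (hvert (Fin.last d)).trans hin.symm
    vert_zero := (hvert 0).trans hout.symm
    foot_vert {j} hj := by rw [← huniq _ _ .refl]; exact min_eq_left hj
    foot_src_eq_foot_tgt e he :=
      congrArg Fin.val (huniq _ _ (.head ⟨e, he, .inl ⟨rfl, rfl⟩⟩ (hreach _))).symm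
    foot_le x := Nat.le_of_lt_succ (foot x).2
    reachOn_foot x := by rw [hvert]; exact hreach x }, rfl⟩

variable (P : g.Spine)

lemma vert_injOn : Set.InjOn P.vert (Set.Iic P.length) := by
  intro i hi j hj hij
  rw [← P.foot_vert hi, hij, P.foot_vert hj]

lemma edge_injective : Function.Injective P.edge := fun i j hij =>
  Fin.ext (P.vert_injOn i.2.le j.2.le (by rw [← P.tgt_edge, ← P.tgt_edge, hij]))

lemma foot_eq_of_reachOn {x y : g.V} (hxy : reachOn g.src g.tgt (Set.range P.edge) x y) :
    P.foot x = P.foot y := by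
  induction hxy with
  | refl => rfl
  | tail _ hstep ih =>
    obtain ⟨e, he, ⟨rfl, rfl⟩ | ⟨rfl, rfl⟩⟩ := hstep
    exacts [ih.trans (P.foot_src_eq_foot_tgt e he), ih.trans (P.foot_src_eq_foot_tgt e he).symm]

lemma length_eq_zero (hroot : g.vin = g.vout) : P.length = 0 :=
  P.vert_injOn (Set.mem_Iic.2 le_rfl) (Nat.zero_le _) (by rw [P.vert_length, P.vert_zero, hroot])

lemma stepSrc_edge (i : Fin P.length) : g.stepSrc (P.edge i, true) = P.vert (i + 1) := P.src_edge i

lemma stepTgt_edge (i : Fin P.length) : g.stepTgt (P.edge i, true) = P.vert i := P.tgt_edge i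

lemma foot_stepTgt {s : g.E × Bool} (hs : s.1 ∉ Set.range P.edge) :
    P.foot (g.stepTgt s) = P.foot (g.stepSrc s) := by
  have hfoot := P.foot_src_eq_foot_tgt s.1 hs
  obtain ⟨e, _ | _⟩ := s
  exacts [hfoot, hfoot.symm]

lemma foot_eq_of_isWalk {a b : g.V} {l : List (g.E × Bool)} (hl : g.IsWalk a l b)
    (hoff : ∀ s ∈ l, s.1 ∉ Set.range P.edge) : ∀ x ∈ l.map g.stepSrc, P.foot x = P.foot a := by
  induction l generalizing a with
  | nil => simp
  | cons s l ih =>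
    obtain ⟨rfl, hl⟩ := hl
    rw [List.forall_mem_cons] at hoff
    rw [List.map_cons, List.forall_mem_cons]
    exact ⟨rfl, fun x hx => (ih hl hoff.2 x hx).trans (P.foot_stepTgt hoff.1)⟩

lemma exists_edge_of_foot_stepTgt_lt {s : g.E × Bool}
    (hs : P.foot (g.stepTgt s) < P.foot (g.stepSrc s)) :
    ∃ i : Fin P.length, s = (P.edge i, true) := by
  by_cases hrange : s.1 ∈ Set.range P.edge
  · obtain ⟨e, b⟩ := s
    obtain ⟨i, rfl⟩ := hrange
    refine ⟨i, ?_⟩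
    cases b
    · simp only [stepSrc, stepTgt, Bool.false_eq_true, if_false, P.src_edge, P.tgt_edge,
        P.foot_vert i.2, P.foot_vert i.2.le] at hs
      omega
    · rfl
  · exact absurd (P.foot_stepTgt hrange) hs.ne

/-- A discrete intermediate value theorem: `foot` can only decrease from `j` to `j - 1`
by leaving `vert j`. -/
lemma vert_mem_of_isWalk {a b : g.V} {l : List (g.E × Bool)} (hl : g.IsWalk a l b) {j : ℕ}
    (hb : P.foot b < j) (ha : j ≤ P.foot a) : P.vert j ∈ l.map g.stepSrc := by
  induction l generalizing a with
  | nil => exact absurd (congrArg P.foot hl) (hb.trans_le ha).ne'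
  | cons s l ih =>
    obtain ⟨rfl, hl⟩ := hl
    rw [List.map_cons]
    obtain hj | hj := le_or_gt j (P.foot (g.stepTgt s))
    · exact .tail _ (ih hl hj)
    · obtain ⟨i, rfl⟩ := P.exists_edge_of_foot_stepTgt_lt (hj.trans_le ha)
      rw [P.stepSrc_edge] at ha ⊢
      rw [P.foot_vert i.2] at ha
      rw [P.stepTgt_edge, P.foot_vert i.2.le] at hj
      obtain rfl : j = i + 1 := by omega
      exact .head _

/-- The steps of the spine from `vert j` down to `vert 0`. -/
def descent : (j : ℕ) → j ≤ P.length → List (g.E × Bool)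
  | 0, _ => []
  | j + 1, hj => (P.edge ⟨j, hj⟩, true) :: descent j (Nat.le_of_succ_le hj)

lemma mem_descent {j : ℕ} {hj : j ≤ P.length} {s : g.E × Bool} :
    s ∈ P.descent j hj ↔ ∃ i : Fin P.length, i < j ∧ (P.edge i, true) = s := by
  induction j with
  | zero => simp [descent]
  | succ j ih =>
    rw [descent, List.mem_cons, ih]
    constructor
    · rintro (rfl | ⟨i, hi, rfl⟩)
      exacts [⟨⟨j, hj⟩, by simp, rfl⟩, ⟨i, by omega, rfl⟩]
    · rintro ⟨i, hi, rfl⟩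
      obtain hij | hij := Nat.lt_succ_iff_lt_or_eq.1 hi
      exacts [.inr ⟨i, hij, rfl⟩, .inl (by simp [← hij])]

lemma toFinset_descent :
    ((P.descent P.length le_rfl).map Prod.fst).toFinset = Finset.univ.image P.edge := by
  ext e
  simp [mem_descent]

lemma isSimplePath_descent {j : ℕ} (hj : j ≤ P.length) :
    g.IsSimplePath (P.vert j) (P.descent j hj) (P.vert 0) := by
  induction j with
  | zero => exact isSimplePath_nil.2 rfl
  | succ j ih =>
    refine isSimplePath_cons.2 ⟨P.stepSrc_edge ⟨j, hj⟩, fun hmem => ?_, fun hmem => ?_, ?_⟩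
    · obtain ⟨_, hs, hedge⟩ := List.mem_map.1 hmem
      obtain ⟨i, hi, rfl⟩ := P.mem_descent.1 hs
      exact hi.ne (congrArg Fin.val (P.edge_injective hedge))
    · obtain hmem | hmem := List.mem_append.1 hmem
      · obtain ⟨_, hs, hvert⟩ := List.mem_map.1 hmem
        obtain ⟨i, hi, rfl⟩ := P.mem_descent.1 hs
        have hij := P.vert_injOn i.2 hj ((P.stepSrc_edge i).symm.trans hvert)
        omega
      · have hj0 := P.vert_injOn hj (Nat.zero_le _) (List.mem_singleton.1 hmem)
        omega
    · rw [P.stepTgt_edge]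
      exact ih (Nat.le_of_succ_le hj)

lemma eq_descent {j : ℕ} (hj : j ≤ P.length) {l : List (g.E × Bool)}
    (hl : g.IsSimplePath (P.vert j) l (P.vert 0)) : l = P.descent j hj := by
  induction j generalizing l with
  | zero => exact hl.eq_nil
  | succ j ih =>
    cases l with
    | nil =>
      have hj0 := P.vert_injOn hj (Nat.zero_le _) (isSimplePath_nil.1 hl)
      omega
    | cons s l =>
      obtain ⟨hs, -, hvert, htail⟩ := isSimplePath_cons.1 hl
      have hdown : P.foot (g.stepTgt s) < j + 1 := by
        by_contra! hup
        have hfoot : P.foot (P.vert 0) < j + 1 := by rw [P.foot_vert (Nat.zero_le _)]; omega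
        exact hvert (List.mem_append_left _ (P.vert_mem_of_isWalk htail.isWalk hfoot hup))
      obtain ⟨i, rfl⟩ := P.exists_edge_of_foot_stepTgt_lt (s := s) <| by
        rwa [hs, P.foot_vert hj]
      obtain rfl : (i : ℕ) = j :=
        Nat.succ_injective (P.vert_injOn i.2 hj ((P.stepSrc_edge i).symm.trans hs))
      rw [P.stepTgt_edge] at htail
      rw [descent, ← ih i.2.le htail]

lemma eq_descent_of_vin_vout {l : List (g.E × Bool)} (hl : g.IsSimplePath g.vin l g.vout) :
    l = P.descent P.length le_rfl :=
  P.eq_descent le_rfl (P.vert_length.symm ▸ P.vert_zero.symm ▸ hl)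

lemma eq_revSteps_descent_of_vout_vin {l : List (g.E × Bool)}
    (hl : g.IsSimplePath g.vout l g.vin) : l = revSteps (P.descent P.length le_rfl) := by
  rw [← P.eq_descent_of_vin_vout hl.revSteps, revSteps_revSteps]

lemma exists_isRotated_of_collapse {c : List (g.E × Bool)}
    (hc : (g.collapse g.vin g.vout).IsSimpleCycle c) : ∃ c', c' ~r c ∧ (g.IsSimpleCycle c' ∨
      c' = P.descent P.length le_rfl ∨ c' = revSteps (P.descent P.length le_rfl)) := by
  obtain ⟨c', hr, hc'⟩ := GraphMonomial.exists_isRotated_of_collapse hc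
  exact ⟨c', hr, hc'.imp_right
    (Or.imp P.eq_descent_of_vin_vout P.eq_revSteps_descent_of_vout_vin)⟩

lemma cyclesDirected_collapse (P : g.Spine) (hg : g.CyclesDirected) :
    (g.collapse g.vin g.vout).CyclesDirected := by
  intro c hc
  obtain ⟨c', hr, hc' | rfl | rfl⟩ := P.exists_isRotated_of_collapse hc
  · exact (hg c' hc').of_isRotated hr
  · refine IsDirectedCycleList.of_isRotated (g := g) (.inl fun s hs => ?_) hr
    obtain ⟨i, -, rfl⟩ := P.mem_descent.1 hs
    rfl
  · refine IsDirectedCycleList.of_isRotated (g := g) (.inr fun s hs => ?_) hr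
    rw [revSteps, List.mem_reverse, List.mem_map] at hs
    obtain ⟨_, ht, rfl⟩ := hs
    obtain ⟨i, -, rfl⟩ := P.mem_descent.1 ht
    rfl

lemma isSimpleCycle_collapse {c : List (g.E × Bool)} (hc : g.IsSimpleCycle c)
    (hoff : ∀ s ∈ c, s.1 ∉ Set.range P.edge) :
    (g.collapse g.vin g.vout).IsSimpleCycle c := by
  obtain ⟨-, ⟨a, hw⟩, -⟩ := isSimpleCycle_iff.1 hc
  refine hc.collapse fun hin hout => ?_
  have hfoot := (P.foot_eq_of_isWalk hw hoff _ hin).trans (P.foot_eq_of_isWalk hw hoff _ hout).symm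
  rw [← P.vert_length, ← P.vert_zero, P.foot_vert le_rfl, P.foot_vert (Nat.zero_le _)] at hfoot
  rw [← P.vert_length, ← P.vert_zero, hfoot]

lemma cycleEdgeSets_collapse (hoff : ∀ S ∈ g.cycleEdgeSets, (S : Set g.E) ⊆ (Set.range P.edge)ᶜ) :
    (g.collapse g.vin g.vout).cycleEdgeSets =
      g.cycleEdgeSets ∪ {S | S = Finset.univ.image P.edge ∧ S.Nonempty} := by
  have hpath := P.isSimplePath_descent le_rfl
  rw [P.vert_length, P.vert_zero] at hpath
  refine Set.Subset.antisymm ?_ (Set.union_subset ?_ ?_)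
  · intro S hS
    have hne : S.Nonempty := nonempty_of_mem_cycleEdgeSets hS
    obtain ⟨c, hc, hcS⟩ := hS
    obtain ⟨c', hr, hc'⟩ := P.exists_isRotated_of_collapse hc
    replace hcS : (c'.map Prod.fst).toFinset = S :=
      (List.toFinset_eq_of_perm _ _ (hr.perm.map Prod.fst)).trans hcS
    obtain hc' | rfl | rfl := hc'
    · exact .inl ⟨c', hc', hcS⟩
    · exact .inr ⟨hcS.symm.trans P.toFinset_descent, hne⟩
    · rw [map_fst_revSteps, List.toFinset_reverse] at hcS
      exact .inr ⟨hcS.symm.trans P.toFinset_descent, hne⟩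
  · rintro _ ⟨c, hc, rfl⟩
    refine ⟨c, P.isSimpleCycle_collapse hc fun s hs => ?_, rfl⟩
    exact hoff _ ⟨c, hc, rfl⟩ (List.mem_toFinset.2 (List.mem_map_of_mem hs))
  · rintro _ ⟨rfl, hne⟩
    rw [← P.toFinset_descent] at hne ⊢
    refine ⟨_, hpath.isSimpleCycle_collapse fun hnil => ?_, rfl⟩
    simp [hnil] at hne

end Spine

/-! ### Cactus-type monomials and paths with attached cacti -/

lemma isPathCactusType_iff : g.IsPathCactusType ↔ IsConnectedGraph g.src g.tgt ∧
    g.CyclesDirected ∧ ∃ P : g.Spine, IsFinsetPartition g.cycleEdgeSets (Set.range P.edge)ᶜ := by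
  constructor
  · rintro ⟨hconn, d, v, f, -, -, hf, hin, hout, hcycles, hpart, hfoot⟩
    obtain ⟨P, hP⟩ := Spine.exists_of_fin hf hin hout hfoot
    refine ⟨hconn, fun c hc => (hcycles c hc).1, P, ?_⟩
    rw [hP]
    refine ⟨?_, hpart⟩
    rintro _ ⟨c, hc, rfl⟩ e he
    obtain ⟨s, hs, rfl⟩ := List.mem_map.1 (List.mem_toFinset.1 he)
    exact (hcycles c hc).2 s hs
  · rintro ⟨hconn, hdir, P, hsub, hpart⟩
    refine ⟨hconn, P.length, fun j => P.vert j, P.edge, ?_, P.edge_injective,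
      fun j => ⟨P.src_edge j, P.tgt_edge j⟩, P.vert_length.symm, P.vert_zero.symm, ?_, hpart, ?_⟩
    · exact fun i j hij =>
        Fin.ext (P.vert_injOn (Nat.le_of_lt_succ i.2) (Nat.le_of_lt_succ j.2) hij)
    · exact fun c hc => ⟨hdir c hc, fun s hs =>
        hsub _ ⟨c, hc, rfl⟩ (List.mem_toFinset.2 (List.mem_map_of_mem hs))⟩
    · intro x
      refine ⟨⟨P.foot x, Nat.lt_succ_of_le (P.foot_le x)⟩, P.reachOn_foot x, fun j hj => ?_⟩
      exact Fin.ext ((P.foot_vert (Nat.le_of_lt_succ j.2)).symm.trans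
        (P.foot_eq_of_reachOn hj).symm)

lemma isCactusType_iff : g.IsCactusType ↔ g.vin = g.vout ∧ IsConnectedGraph g.src g.tgt ∧
    g.CyclesDirected ∧ IsFinsetPartition g.cycleEdgeSets Set.univ := by
  simp [IsCactusType, IsOrientedCactus, IsFinsetPartition, CyclesDirected, cycleEdgeSets]

lemma isCactusType_iff_isPathCactusType :
    g.IsCactusType ↔ g.vin = g.vout ∧ g.IsPathCactusType := by
  rw [isCactusType_iff, isPathCactusType_iff]
  refine and_congr_right fun hroot => and_congr_right fun hconn => and_congr_right fun _ => ?_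
  have hrange (P : g.Spine) : (Set.range P.edge)ᶜ = Set.univ := by
    have : IsEmpty (Fin P.length) := P.length_eq_zero hroot ▸ Fin.isEmpty'
    rw [Set.range_eq_empty, Set.compl_empty]
  exact ⟨fun hpart => ⟨.trivial hconn hroot, (hrange _).symm ▸ hpart⟩,
    fun ⟨P, hpart⟩ => hrange P ▸ hpart⟩

lemma IsCactusType.isPathCactusType (hg : g.IsCactusType) : g.IsPathCactusType :=
  (isCactusType_iff_isPathCactusType.1 hg).2

lemma IsPathCactusType.collapse (hg : g.IsPathCactusType) :
    (g.collapse g.vin g.vout).IsCactusType := by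
  obtain ⟨hconn, hdir, P, hpart⟩ := isPathCactusType_iff.1 hg
  refine isCactusType_iff.2 ⟨proj_left_eq_right, isConnectedGraph_collapse hconn,
    P.cyclesDirected_collapse hdir, ?_⟩
  have hunion := hpart.union (.setOf_eq_and_nonempty (Finset.univ.image P.edge)) <| by
    simp [disjoint_compl_left]
  rw [← P.cycleEdgeSets_collapse hpart.1, Finset.coe_image, Finset.coe_univ, Set.image_univ,
    Set.compl_union_self] at hunion
  exact hunion

/-! ### Concatenation -/

/-- The disjoint union of `g` and `h`, with the input of `h` and the output of `g`. -/
def disjUnion (g h : GraphMonomial L K) : GraphMonomial L K where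
  V := g.V ⊕ h.V
  E := g.E ⊕ h.E
  fintV := inferInstance
  fintE := inferInstance
  src := Sum.map g.src h.src
  tgt := Sum.map g.tgt h.tgt
  vin := .inr h.vin
  vout := .inl g.vout
  labL := Sum.elim g.labL h.labL
  labK := Sum.elim g.labK h.labK

lemma isSummand_inl : IsSummand g (g.disjUnion h) Sum.inl Sum.inl where
  src _ := rfl
  tgt _ := rfl
  injective_vert := Sum.inl_injective
  injective_edge := Sum.inl_injective
  mem_range_edge := by
    rintro (e | e) he
    · exact ⟨e, rfl⟩
    · obtain ⟨_, ⟨⟩⟩ | ⟨_, ⟨⟩⟩ := he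

lemma isSummand_inr : IsSummand h (g.disjUnion h) Sum.inr Sum.inr where
  src _ := rfl
  tgt _ := rfl
  injective_vert := Sum.inr_injective
  injective_edge := Sum.inr_injective
  mem_range_edge := by
    rintro (e | e) he
    · obtain ⟨_, ⟨⟩⟩ | ⟨_, ⟨⟩⟩ := he
    · exact ⟨e, rfl⟩

lemma not_isWalk_inl_inr {a : g.V} {b : h.V} {l : List ((g.disjUnion h).E × Bool)} :
    ¬ (g.disjUnion h).IsWalk (Sum.inl a) l (Sum.inr b) := fun hl => by
  obtain ⟨_, _, _, heq, _⟩ := isSummand_inl.exists_isWalk hl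
  cases heq

/-- The graph monomial obtained by identifying the input of `g` with the output of `h`. It
evaluates to the product of the evaluations of `g` and `h`. -/
def wedge (g h : GraphMonomial L K) : GraphMonomial L K :=
  (g.disjUnion h).collapse (.inl g.vin) (.inr h.vout)

/-- The inclusion of the vertices of `g` into `g.wedge h`. -/
def inclLeft (g h : GraphMonomial L K) (x : g.V) : (g.wedge h).V :=
  (g.disjUnion h).proj (.inl g.vin) (.inr h.vout) (.inl x)

/-- The inclusion of the vertices of `h` into `g.wedge h`. -/
def inclRight (g h : GraphMonomial L K) (x : h.V) : (g.wedge h).V :=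
  (g.disjUnion h).proj (.inl g.vin) (.inr h.vout) (.inr x)

lemma inclLeft_vin : inclLeft g h g.vin = inclRight g h h.vout := proj_left_eq_right

lemma isHom_inclLeft : IsHom g (g.wedge h) (inclLeft g h) Sum.inl := ⟨fun _ => rfl, fun _ => rfl⟩

lemma isHom_inclRight : IsHom h (g.wedge h) (inclRight g h) Sum.inr := ⟨fun _ => rfl, fun _ => rfl⟩

lemma inclLeft_injective : Function.Injective (inclLeft g h) := by
  refine fun x y hxy => Sum.inl_injective (β := h.V) ?_
  exact proj_injOn (g := g.disjUnion h) (s := Set.range Sum.inl) (by rintro - ⟨_, ⟨⟩⟩)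
    ⟨x, rfl⟩ ⟨y, rfl⟩ hxy

lemma inclRight_injective : Function.Injective (inclRight g h) := by
  refine fun x y hxy => Sum.inr_injective (α := g.V) ?_
  exact proj_injOn (g := g.disjUnion h) (s := Set.range Sum.inr) (by rintro ⟨_, ⟨⟩⟩)
    ⟨x, rfl⟩ ⟨y, rfl⟩ hxy

lemma forall_wedge {p : (g.wedge h).V → Prop} :
    (∀ x, p x) ↔ (∀ x, p (inclLeft g h x)) ∧ ∀ x, p (inclRight g h x) :=
  proj_surjective.forall.trans Sum.forall

lemma isConnectedGraph_wedge (hg : IsConnectedGraph g.src g.tgt)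
    (hh : IsConnectedGraph h.src h.tgt) :
    IsConnectedGraph (g.wedge h).src (g.wedge h).tgt := by
  have hjunction : ∀ x, reachOn (g.wedge h).src (g.wedge h).tgt ∅ x (inclLeft g h g.vin) :=
    forall_wedge.2 ⟨fun x => isHom_inclLeft.reachOn (fun _ he => he) (hg x g.vin),
      fun x => inclLeft_vin (h := h) ▸ isHom_inclRight.reachOn (fun _ he => he) (hh x h.vout)⟩
  exact fun x y => (hjunction x).trans ((connSetoid _ _ ∅).symm (hjunction y))

lemma exists_isSimpleCycle_of_disjUnion {c : List ((g.E ⊕ h.E) × Bool)}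
    (hc : (g.disjUnion h).IsSimpleCycle c) :
    (∃ c', g.IsSimpleCycle c' ∧ c'.map (Prod.map Sum.inl id) = c) ∨
      ∃ c', h.IsSimpleCycle c' ∧ c'.map (Prod.map Sum.inr id) = c := by
  obtain ⟨a | a, hw⟩ := (isSimpleCycle_iff.1 hc).2.1
  exacts [.inl (isSummand_inl.exists_isSimpleCycle hc hw),
    .inr (isSummand_inr.exists_isSimpleCycle hc hw)]

/-- A cycle through both `g` and `h` would visit the junction twice. -/
lemma exists_isRotated_of_wedge {c : List ((g.E ⊕ h.E) × Bool)}
    (hc : (g.wedge h).IsSimpleCycle c) :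
    (∃ c', g.IsSimpleCycle c' ∧ c'.map (Prod.map Sum.inl id) ~r c) ∨
      ∃ c', h.IsSimpleCycle c' ∧ c'.map (Prod.map Sum.inr id) ~r c := by
  obtain ⟨c', hr, hc' | hc' | hc'⟩ := exists_isRotated_of_collapse hc
  · obtain ⟨c'', hc'', rfl⟩ | ⟨c'', hc'', rfl⟩ := exists_isSimpleCycle_of_disjUnion hc'
    exacts [.inl ⟨c'', hc'', hr⟩, .inr ⟨c'', hc'', hr⟩]
  · exact (not_isWalk_inl_inr hc'.isWalk).elim
  · exact (not_isWalk_inl_inr hc'.isWalk.revSteps).elim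

lemma CyclesDirected.wedge (hg : g.CyclesDirected) (hh : h.CyclesDirected) :
    (g.wedge h).CyclesDirected := by
  intro c hc
  obtain ⟨c', hc', hr⟩ | ⟨c', hc', hr⟩ := exists_isRotated_of_wedge hc
  · exact (IsDirectedCycleList.map (h := g.wedge h) _ (hg c' hc')).of_isRotated hr
  · exact (IsDirectedCycleList.map (h := g.wedge h) _ (hh c' hc')).of_isRotated hr

lemma cycleEdgeSets_wedge : (g.wedge h).cycleEdgeSets =
    Finset.map .inl '' g.cycleEdgeSets ∪ Finset.map .inr '' h.cycleEdgeSets := by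
  refine Set.Subset.antisymm ?_ (Set.union_subset ?_ ?_)
  · rintro _ ⟨c, hc, rfl⟩
    obtain ⟨c', hc', hr⟩ | ⟨c', hc', hr⟩ := exists_isRotated_of_wedge hc
    · exact .inl ⟨_, ⟨c', hc', rfl⟩, map_toFinset_of_isRotated .inl hr⟩
    · exact .inr ⟨_, ⟨c', hc', rfl⟩, map_toFinset_of_isRotated .inr hr⟩
  · rintro _ ⟨_, ⟨c, hc, rfl⟩, rfl⟩
    exact ⟨_, isHom_inclLeft.isSimpleCycle Sum.inl_injective hc inclLeft_injective.injOn,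
      (map_toFinset_of_isRotated .inl (.refl _)).symm⟩
  · rintro _ ⟨_, ⟨c, hc, rfl⟩, rfl⟩
    exact ⟨_, isHom_inclRight.isSimpleCycle Sum.inr_injective hc inclRight_injective.injOn,
      (map_toFinset_of_isRotated .inr (.refl _)).symm⟩

namespace Spine

variable (P : g.Spine) (Q : h.Spine)

/-- The vertices of the spine `P`, followed by those of `Q`, where the first vertex of `Q` is
the last vertex of `P`. -/
def wedgeVert (n : ℕ) : (g.wedge h).V :=
  if n ≤ P.length then inclLeft g h (P.vert n) else inclRight g h (Q.vert (n - P.length))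

/-- The edges of the spine `P`, followed by those of `Q`. -/
def wedgeEdge : Fin (P.length + Q.length) → (g.wedge h).E :=
  Fin.append (Sum.inl ∘ P.edge) (Sum.inr ∘ Q.edge)

/-- The feet along `P`, followed by those along `Q` in the numbering of `wedgeVert`. -/
def wedgeFoot : (g.wedge h).V → ℕ :=
  Quot.lift (Sum.elim P.foot fun x => P.length + Q.foot x) <| by
    rintro _ _ ⟨rfl, rfl⟩
    simp [← P.vert_length, ← Q.vert_zero, P.foot_vert, Q.foot_vert]

variable {P Q}

lemma wedgeVert_of_le {n : ℕ} (hn : n ≤ P.length) :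
    P.wedgeVert Q n = inclLeft g h (P.vert n) := if_pos hn

lemma wedgeVert_add (n : ℕ) : P.wedgeVert Q (P.length + n) = inclRight g h (Q.vert n) := by
  obtain rfl | hn := Nat.eq_zero_or_pos n
  · rw [add_zero, wedgeVert_of_le le_rfl, P.vert_length, Q.vert_zero, inclLeft_vin]
  · rw [wedgeVert, if_neg (by omega), Nat.add_sub_cancel_left]

lemma wedgeEdge_castAdd (i : Fin P.length) :
    P.wedgeEdge Q (Fin.castAdd _ i) = Sum.inl (P.edge i) := Fin.append_left _ _ i

lemma wedgeEdge_natAdd (i : Fin Q.length) :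
    P.wedgeEdge Q (Fin.natAdd _ i) = Sum.inr (Q.edge i) := Fin.append_right _ _ i

lemma wedgeFoot_inclLeft (x : g.V) : P.wedgeFoot Q (inclLeft g h x) = P.foot x := rfl

lemma wedgeFoot_inclRight (x : h.V) : P.wedgeFoot Q (inclRight g h x) = P.length + Q.foot x := rfl

lemma compl_range_wedgeEdge : (Set.range (P.wedgeEdge Q))ᶜ =
    Sum.inl '' (Set.range P.edge)ᶜ ∪ Sum.inr '' (Set.range Q.edge)ᶜ := by
  refine Eq.trans (congrArg Compl.compl ?_) (compl_image_inl_union_image_inr _ _)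
  rw [← Set.range_comp, ← Set.range_comp]
  exact range_fin_append _ _

variable (P Q)

/-- The concatenation of two spines. -/
def wedge : (g.wedge h).Spine where
  length := P.length + Q.length
  vert := P.wedgeVert Q
  edge := P.wedgeEdge Q
  foot := P.wedgeFoot Q
  src_edge i := by
    induction i using Fin.addCases with
    | left i =>
      rw [wedgeEdge_castAdd, isHom_inclLeft.src, P.src_edge, Fin.val_castAdd,
        wedgeVert_of_le (by omega)]
    | right i =>
      rw [wedgeEdge_natAdd, isHom_inclRight.src, Q.src_edge, Fin.val_natAdd, add_assoc,
        wedgeVert_add]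
  tgt_edge i := by
    induction i using Fin.addCases with
    | left i =>
      rw [wedgeEdge_castAdd, isHom_inclLeft.tgt, P.tgt_edge, Fin.val_castAdd,
        wedgeVert_of_le (by omega)]
    | right i =>
      rw [wedgeEdge_natAdd, isHom_inclRight.tgt, Q.tgt_edge, Fin.val_natAdd, wedgeVert_add]
  vert_length := (wedgeVert_add _).trans (congrArg (inclRight g h) Q.vert_length)
  vert_zero := (wedgeVert_of_le (Nat.zero_le _)).trans (congrArg (inclLeft g h) P.vert_zero)
  foot_vert {j} hj := by
    obtain hjP | hjP := le_total j P.length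
    · rw [wedgeVert_of_le hjP, wedgeFoot_inclLeft, P.foot_vert hjP]
    · obtain ⟨n, rfl⟩ := Nat.exists_eq_add_of_le hjP
      rw [wedgeVert_add, wedgeFoot_inclRight, Q.foot_vert (by omega)]
  foot_src_eq_foot_tgt e he := by
    obtain ⟨e, he', rfl⟩ | ⟨e, he', rfl⟩ := compl_range_wedgeEdge.subset he
    exacts [P.foot_src_eq_foot_tgt e he',
      congrArg (P.length + ·) (Q.foot_src_eq_foot_tgt e he')]
  foot_le := forall_wedge.2 ⟨fun x => (P.foot_le x).trans (Nat.le_add_right _ _),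
    fun x => Nat.add_le_add_left (Q.foot_le x) _⟩
  reachOn_foot := by
    refine forall_wedge.2 ⟨fun x => ?_, fun x => ?_⟩
    · rw [wedgeFoot_inclLeft, wedgeVert_of_le (P.foot_le x)]
      exact isHom_inclLeft.reachOn
        (fun e he => compl_range_wedgeEdge.superset (.inl ⟨e, he, rfl⟩)) (P.reachOn_foot x)
    · rw [wedgeFoot_inclRight, wedgeVert_add]
      exact isHom_inclRight.reachOn
        (fun e he => compl_range_wedgeEdge.superset (.inr ⟨e, he, rfl⟩)) (Q.reachOn_foot x)

end Spine

lemma IsPathCactusType.wedge (hg : g.IsPathCactusType) (hh : h.IsPathCactusType) :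
    (g.wedge h).IsPathCactusType := by
  obtain ⟨hgconn, hgdir, P, hP⟩ := isPathCactusType_iff.1 hg
  obtain ⟨hhconn, hhdir, Q, hQ⟩ := isPathCactusType_iff.1 hh
  refine isPathCactusType_iff.2 ⟨isConnectedGraph_wedge hgconn hhconn, hgdir.wedge hhdir,
    P.wedge Q, ?_⟩
  rw [cycleEdgeSets_wedge]
  refine Eq.subst Spine.compl_range_wedgeEdge.symm ((hP.map .inl).union (hQ.map .inr) ?_)
  rw [Set.disjoint_left]
  rintro _ ⟨e, -, rfl⟩ ⟨_, -, ⟨⟩⟩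

lemma IsCactusType.wedge (hg : g.IsCactusType) (hh : h.IsCactusType) :
    (g.wedge h).IsCactusType := by
  obtain ⟨hgroot, hg⟩ := isCactusType_iff_isPathCactusType.1 hg
  obtain ⟨hhroot, hh⟩ := isCactusType_iff_isPathCactusType.1 hh
  refine isCactusType_iff_isPathCactusType.2 ⟨?_, hg.wedge hh⟩
  calc inclRight g h h.vin = inclRight g h h.vout := by rw [hhroot]
    _ = inclLeft g h g.vin := inclLeft_vin.symm
    _ = inclLeft g h g.vout := by rw [hgroot]

/-- The graph monomial with a single vertex and no edge. It evaluates to the identity matrix. -/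
def point (L : ℕ) (K : Type) : GraphMonomial L K where
  V := Unit
  E := Empty
  fintV := inferInstance
  fintE := inferInstance
  src := Empty.elim
  tgt := Empty.elim
  vin := ()
  vout := ()
  labL := Empty.elim
  labK := Empty.elim

lemma isCactusType_point : (point L K).IsCactusType := by
  refine ⟨rfl, fun _ _ => .refl, fun c hc => ?_, fun e => e.elim⟩
  obtain ⟨s, -⟩ := List.exists_mem_of_ne_nil c hc.1
  exact s.1.elim

/-! ### Evaluation -/

section Eval

variable {N : ℕ} (A : Fin L → K → Matrix (Fin N) (Fin N) ℂ)

/-- The summand of a vertex labelling `φ` in the evaluation of `g`. -/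
def weight (g : GraphMonomial L K) (φ : g.V → Fin N) : ℂ :=
  ∏ e, A (g.labL e) (g.labK e) (φ (g.tgt e)) (φ (g.src e))

lemma eval_apply (i j : Fin N) : g.eval A i j =
    ∑ φ : g.V → Fin N, if φ g.vin = j ∧ φ g.vout = i then g.weight A φ else 0 := rfl

lemma weight_disjUnion (φ : g.V → Fin N) (ψ : h.V → Fin N) :
    (g.disjUnion h).weight A (Sum.elim φ ψ) = g.weight A φ * h.weight A ψ :=
  Fintype.prod_sum_type _

lemma sum_collapse {α M : Type*} [Fintype α] [DecidableEq α] [AddCommMonoid M] (a b : g.V)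
    (F : (g.V → α) → M) :
    ∑ φ : (g.collapse a b).V → α, F (φ ∘ g.proj a b) =
      ∑ φ : g.V → α, if φ a = φ b then F φ else 0 := by
  rw [← Finset.sum_filter]
  refine Finset.sum_bij (fun φ _ => φ ∘ g.proj a b) (fun φ _ => ?_)
    (fun φ _ ψ _ => fun hφψ => proj_surjective.injective_comp_right hφψ) (fun φ hφ => ?_)
    (fun _ _ => rfl)
  · exact Finset.mem_filter.2 ⟨Finset.mem_univ _, congrArg φ proj_left_eq_right⟩
  · have hab : φ a = φ b := (Finset.mem_filter.1 hφ).2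
    exact ⟨Quot.lift φ (by rintro _ _ ⟨rfl, rfl⟩; exact hab), Finset.mem_univ _, rfl⟩

lemma eval_collapse_apply (a b : g.V) (i j : Fin N) : (g.collapse a b).eval A i j =
    ∑ φ : g.V → Fin N, if φ a = φ b then
      if φ g.vin = j ∧ φ g.vout = i then g.weight A φ else 0 else 0 :=
  sum_collapse a b fun φ => if φ g.vin = j ∧ φ g.vout = i then g.weight A φ else 0

lemma eval_collapse_vin_vout : (g.collapse g.vin g.vout).eval A = dproj (g.eval A) := by
  ext i j
  rw [eval_collapse_apply]
  simp only [dproj, eval_apply, Matrix.of_apply]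
  split_ifs with hij
  · exact Finset.sum_congr rfl fun φ _ => by grind
  · exact Finset.sum_eq_zero fun φ _ => by grind

lemma dproj_eval_of_vin_eq_vout (hg : g.vin = g.vout) : dproj (g.eval A) = g.eval A := by
  ext i j
  refine ite_eq_left_iff.2 fun hij => (Finset.sum_eq_zero fun φ _ => if_neg ?_).symm
  rintro ⟨rfl, rfl⟩
  exact hij (congrArg φ hg.symm)

lemma eval_wedge : (g.wedge h).eval A = g.eval A * h.eval A := by
  ext i j
  rw [Matrix.mul_apply]
  calc (g.wedge h).eval A i j
    _ = ∑ φ : (g.disjUnion h).V → Fin N, if φ (.inl g.vin) = φ (.inr h.vout) then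
          if φ (.inr h.vin) = j ∧ φ (.inl g.vout) = i then (g.disjUnion h).weight A φ else 0
        else 0 := eval_collapse_apply (g := g.disjUnion h) A _ _ i j
    _ = ∑ φ : g.V → Fin N, ∑ ψ : h.V → Fin N, if φ g.vin = ψ h.vout then
          if ψ h.vin = j ∧ φ g.vout = i then g.weight A φ * h.weight A ψ else 0 else 0 := by
      simp_rw [← weight_disjUnion]
      refine Eq.trans ?_ (Fintype.sum_prod_type' _)
      exact (Fintype.sum_equiv (κ := (g.disjUnion h).V → Fin N)
        (Equiv.sumArrowEquivProdArrow g.V h.V (Fin N)).symm _ _ fun _ => rfl).symm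
    _ = ∑ φ : g.V → Fin N, ∑ ψ : h.V → Fin N, ∑ k,
          (if φ g.vin = k ∧ φ g.vout = i then g.weight A φ else 0) *
            if ψ h.vin = j ∧ ψ h.vout = k then h.weight A ψ else 0 := by
      refine Finset.sum_congr rfl fun φ _ => Finset.sum_congr rfl fun ψ _ => ?_
      rw [Fintype.sum_eq_single (φ g.vin) fun k hk => by simp [hk.symm]]
      split_ifs <;> grind
    _ = ∑ k, g.eval A i k * h.eval A k j := by
      simp_rw [eval_apply, Finset.sum_mul_sum]
      rw [Finset.sum_comm_cycle]

lemma eval_point : (point L K).eval A = 1 := by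
  ext i j
  calc (point L K).eval A i j
    _ = ∑ k : Fin N, if k = j ∧ k = i then 1 else 0 :=
      Fintype.sum_equiv (ι := (point L K).V → Fin N) (Equiv.funUnique Unit (Fin N)) _ _
        fun _ => rfl
    _ = (1 : Matrix (Fin N) (Fin N) ℂ) i j := by
      rw [Matrix.one_apply, Fintype.sum_eq_single i fun k hk => if_neg fun hk' => hk hk'.2]
      simp

end Eval

end GraphMonomial

/-! ### Spans of evaluations -/

/-- The diagonal projection `Δ` as a linear map. -/
def dprojLinearMap (N : ℕ) : Matrix (Fin N) (Fin N) ℂ →ₗ[ℂ] Matrix (Fin N) (Fin N) ℂ where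
  toFun := dproj
  map_add' x y := by
    ext i j
    simp only [dproj, Matrix.of_apply, Matrix.add_apply]
    split_ifs <;> simp
  map_smul' c x := by
    ext i j
    simp [dproj]

section Span

variable {Ω : Type*} {L N : ℕ} {K : Type} (A : Fin L → K → Ω → Matrix (Fin N) (Fin N) ℂ)

/-- The linear span of the evaluations at `A` of the graph monomials satisfying `P`: it is `𝒞_N`
for `P = GraphMonomial.IsCactusType` and `ℱ_N` for `P = GraphMonomial.IsPathCactusType`. -/
def evalSpan (P : GraphMonomial L K → Prop) : Submodule ℂ (Ω → Matrix (Fin N) (Fin N) ℂ) :=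
  Submodule.span ℂ {x | ∃ g : GraphMonomial L K, P g ∧ x = fun ω => g.eval fun ℓ k => A ℓ k ω}

variable {A} {P : GraphMonomial L K → Prop}

lemma one_mem_evalSpan (hP : P (.point L K)) : 1 ∈ evalSpan A P :=
  Submodule.subset_span ⟨_, hP, funext fun _ => (GraphMonomial.eval_point _).symm⟩

lemma mul_mem_evalSpan (hP : ∀ g h, P g → P h → P (g.wedge h))
    {x y : Ω → Matrix (Fin N) (Fin N) ℂ} (hx : x ∈ evalSpan A P) (hy : y ∈ evalSpan A P) :
    x * y ∈ evalSpan A P := by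
  refine mul_mem_span ?_ hx hy
  rintro _ ⟨g, hg, rfl⟩ _ ⟨h, hh, rfl⟩
  exact ⟨_, hP g h hg hh, funext fun _ => (GraphMonomial.eval_wedge _).symm⟩

lemma dproj_image_evalSpan {Q : GraphMonomial L K → Prop}
    (hPQ : ∀ g, P g → Q (g.collapse g.vin g.vout)) (hQP : ∀ g, Q g → P g)
    (hQ : ∀ g, Q g → g.vin = g.vout) :
    (fun x ω => dproj (x ω)) '' (evalSpan A P : Set (Ω → Matrix (Fin N) (Fin N) ℂ)) =
      evalSpan A Q := by
  refine congrArg SetLike.coe ((Submodule.map_span ((dprojLinearMap N).compLeft Ω) _).trans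
    (congrArg (Submodule.span ℂ) (Set.ext fun x => ⟨?_, ?_⟩)))
  · rintro ⟨_, ⟨g, hg, rfl⟩, rfl⟩
    exact ⟨_, hPQ g hg, funext fun _ => (GraphMonomial.eval_collapse_vin_vout _).symm⟩
  · rintro ⟨g, hg, rfl⟩
    exact ⟨_, ⟨g, hQP g hg, rfl⟩, funext fun _ =>
      GraphMonomial.dproj_eval_of_vin_eq_vout _ (hQ g hg)⟩

end Span

theorem cactus_spans_are_unital_algebras_general
    {Ω : Type*} {K : Type} {L N : ℕ} (A : Fin L → K → Ω → Matrix (Fin N) (Fin N) ℂ) :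
    1 ∈ evalSpan A GraphMonomial.IsCactusType ∧
    (∀ x y, x ∈ evalSpan A GraphMonomial.IsCactusType →
      y ∈ evalSpan A GraphMonomial.IsCactusType →
      x * y ∈ evalSpan A GraphMonomial.IsCactusType) ∧
    1 ∈ evalSpan A GraphMonomial.IsPathCactusType ∧
    (∀ x y, x ∈ evalSpan A GraphMonomial.IsPathCactusType →
      y ∈ evalSpan A GraphMonomial.IsPathCactusType →
      x * y ∈ evalSpan A GraphMonomial.IsPathCactusType) ∧
    (fun x ω => dproj (x ω)) ''
        (evalSpan A GraphMonomial.IsPathCactusType : Set (Ω → Matrix (Fin N) (Fin N) ℂ)) =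
      evalSpan A GraphMonomial.IsCactusType :=
  ⟨one_mem_evalSpan GraphMonomial.isCactusType_point,
    fun _ _ => mul_mem_evalSpan fun _ _ => .wedge,
    one_mem_evalSpan GraphMonomial.isCactusType_point.isPathCactusType,
    fun _ _ => mul_mem_evalSpan fun _ _ => .wedge,
    dproj_image_evalSpan (fun _ => GraphMonomial.IsPathCactusType.collapse)
      (fun _ => GraphMonomial.IsCactusType.isPathCactusType) fun _ hg => hg.1⟩

/-- Lemma 4.2.
The linear spans `𝒞_N` (of evaluations of cactus-type monomials) and `ℱ_N`
(of evaluations of path-with-cacti monomials) are unital subalgebras of the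
algebra of `N × N` random matrices, and `Δ(ℱ_N) = 𝒞_N`. -/
theorem cactus_spans_are_unital_algebras
    {Ω : Type} [MeasurableSpace Ω] (μ : Measure Ω) [IsProbabilityMeasure μ]
    {K : Type} [Nonempty K] [Finite K] {L : ℕ} (hL : 1 ≤ L) (N : ℕ)
    (A : Fin L → K → Ω → Matrix (Fin N) (Fin N) ℂ)
    (hmeas : ∀ ℓ k, EntriesMeasurable (A ℓ k))
    (hbdd : ∀ ℓ k, EntriesBounded μ (A ℓ k)) :
    (1 : Ω → Matrix (Fin N) (Fin N) ℂ) ∈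
        Submodule.span ℂ {x : Ω → Matrix (Fin N) (Fin N) ℂ |
          ∃ g : GraphMonomial L K, g.IsCactusType ∧
            x = fun ω => g.eval fun ℓ k => A ℓ k ω} ∧
    (∀ x y : Ω → Matrix (Fin N) (Fin N) ℂ,
      x ∈ Submodule.span ℂ {x : Ω → Matrix (Fin N) (Fin N) ℂ |
          ∃ g : GraphMonomial L K, g.IsCactusType ∧
            x = fun ω => g.eval fun ℓ k => A ℓ k ω} →
      y ∈ Submodule.span ℂ {x : Ω → Matrix (Fin N) (Fin N) ℂ |
          ∃ g : GraphMonomial L K, g.IsCactusType ∧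
            x = fun ω => g.eval fun ℓ k => A ℓ k ω} →
      x * y ∈ Submodule.span ℂ {x : Ω → Matrix (Fin N) (Fin N) ℂ |
          ∃ g : GraphMonomial L K, g.IsCactusType ∧
            x = fun ω => g.eval fun ℓ k => A ℓ k ω}) ∧
    (1 : Ω → Matrix (Fin N) (Fin N) ℂ) ∈
        Submodule.span ℂ {x : Ω → Matrix (Fin N) (Fin N) ℂ |
          ∃ g : GraphMonomial L K, g.IsPathCactusType ∧
            x = fun ω => g.eval fun ℓ k => A ℓ k ω} ∧
    (∀ x y : Ω → Matrix (Fin N) (Fin N) ℂ,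
      x ∈ Submodule.span ℂ {x : Ω → Matrix (Fin N) (Fin N) ℂ |
          ∃ g : GraphMonomial L K, g.IsPathCactusType ∧
            x = fun ω => g.eval fun ℓ k => A ℓ k ω} →
      y ∈ Submodule.span ℂ {x : Ω → Matrix (Fin N) (Fin N) ℂ |
          ∃ g : GraphMonomial L K, g.IsPathCactusType ∧
            x = fun ω => g.eval fun ℓ k => A ℓ k ω} →
      x * y ∈ Submodule.span ℂ {x : Ω → Matrix (Fin N) (Fin N) ℂ |
          ∃ g : GraphMonomial L K, g.IsPathCactusType ∧
            x = fun ω => g.eval fun ℓ k => A ℓ k ω}) ∧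
    ((fun x : Ω → Matrix (Fin N) (Fin N) ℂ => fun ω => dproj (x ω)) ''
        (Submodule.span ℂ {x : Ω → Matrix (Fin N) (Fin N) ℂ |
          ∃ g : GraphMonomial L K, g.IsPathCactusType ∧
            x = fun ω => g.eval fun ℓ k => A ℓ k ω} : Set (Ω → Matrix (Fin N) (Fin N) ℂ)) =
      (Submodule.span ℂ {x : Ω → Matrix (Fin N) (Fin N) ℂ |
          ∃ g : GraphMonomial L K, g.IsCactusType ∧
            x = fun ω => g.eval fun ℓ k => A ℓ k ω} : Set (Ω → Matrix (Fin N) (Fin N) ℂ))) :=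
  cactus_spans_are_unital_algebras_general A
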